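/- For $L \ge 1$ and $S \subseteq \mathbb{Z}_L$ (the integers mod $L$), let $d^*(S) = \{a-b \bmod L : a,b\in S,\ a\ne b\}$. A conflict-avoiding code (CAC) of length $L$ and weight $w$ is a set of $w$-element subsets (codewords) of $\mathbb{Z}_L$ such that $d^*(S)\cap d^*(S')=\emptyset$ for all distinct codewords $S,S'$; it is equi-difference if every codeword has the form $\{0,g,2g,\ldots,(w-1)g\}$ for some $g\in\mathbb{Z}_L$. Let $w \ge 2$ be an integer and let $p_1 < p_2 < \cdots < p_n$ be primes with $p_1 \ge 2w-1$. Suppose that for each $i=1,\ldots,n$ there exists an equi-difference CAC of length $p_i$ and weight $w$ with $m_i$ codewords. Then for any positive integers $r_1,\ldots,r_n$ there exists an equi-difference CAC of length $L=p_1^{r_1}\cdots p_n^{r_n}$ and weight $w$ having exactly $$\sum_{i=1}^{n} \left( m_i\,\frac{p_i^{r_i}-1}{p_i-1}\prod_{j=i+1}^{n} p_j^{r_j}\right)$$ codewords. -/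

import Mathlib

/-- The set of nonzero differences `{a - b : a, b ∈ S, a ≠ b}` of a subset `S ⊆ Z_L`. -/
def dstar {L : ℕ} (S : Finset (ZMod L)) : Finset (ZMod L) :=
  ((S ×ˢ S).image fun p => p.1 - p.2).erase 0

/-- A conflict-avoiding code of length `L` and weight `w`. -/
def IsCAC (L w : ℕ) (C : Finset (Finset (ZMod L))) : Prop :=
  (∀ S ∈ C, S.card = w) ∧
  ∀ S ∈ C, ∀ S' ∈ C, S ≠ S' → Disjoint (dstar S) (dstar S')

/-- A codeword is equi-difference if it is of the form `{0, g, 2g, …, (w-1)g}`. -/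
def IsEquiDiff {L : ℕ} (w : ℕ) (S : Finset (ZMod L)) : Prop :=
  ∃ g : ZMod L, S = (Finset.range w).image fun j : ℕ => (j : ZMod L) * g

/-!
An equi-difference code is determined by its generators, and it is conflict-avoiding of weight `w`
exactly when the multiples `j • g` with `0 < |j| < w` of its generators `g` are nonzero, those of
different generators being different. This makes sense in any abelian group, and it lifts along a
homomorphism `π : B → C`: the whole preimage of a set of generators in `C` can be added to a set of
generators in `ker π`, as long as the orders of `ker π` and `C` have no small prime factors. Indeed,
if `j • x = j' • y`, then `π x` and `π y` are the same generator `c`, and `(j - j') • c = 0` forces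
`j = j'`, so that `j • (x - y) = 0` in `ker π`, whence `x = y`. For `π : ZMod (M * L) → ZMod M`,
codes with `a` and `b` codewords of lengths `M` and `L` thus combine to one of length `M * L` with
`a * L + b` codewords.
-/

open scoped Nat

section GeneratorSets

variable {A B C : Type*} [AddCommGroup A] [AddCommGroup B] [AddCommGroup C] {w : ℕ}

/-- `G` generates an equi-difference conflict-avoiding code of weight `w`, in an arbitrary abelian
group. The integers `j` with `0 < |j| < w` are the nonzero differences of elements of
`{0, …, w - 1}`, so the elements `j • g` are the nonzero differences of the codeword
`{0, g, …, (w - 1) g}`; that they do not vanish says that this codeword has `w` elements. -/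
structure IsCACGeneratorSet (w : ℕ) (G : Set A) : Prop where
  zsmul_ne_zero : ∀ g ∈ G, ∀ j : ℤ, j ≠ 0 → j.natAbs < w → j • g ≠ 0
  eq_of_zsmul_eq : ∀ g ∈ G, ∀ g' ∈ G, ∀ j j' : ℤ, j ≠ 0 → j.natAbs < w → j'.natAbs < w →
    j • g = j' • g' → g = g'

theorem IsCACGeneratorSet.image {G : Set A} (hG : IsCACGeneratorSet w G) {f : A →+ B}
    (hf : Function.Injective f) : IsCACGeneratorSet w (f '' G) := by
  constructor
  · rintro _ ⟨g, hg, rfl⟩ j hj hjw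
    rw [← map_zsmul, map_ne_zero_iff f hf]
    exact hG.zsmul_ne_zero g hg j hj hjw
  · rintro _ ⟨g, hg, rfl⟩ _ ⟨g', hg', rfl⟩ j j' hj hjw hjw' h
    rw [← map_zsmul, ← map_zsmul] at h
    rw [hG.eq_of_zsmul_eq g hg g' hg' j j' hj hjw hjw' (hf h)]

theorem IsCACGeneratorSet.union {G H : Set A} (hG : IsCACGeneratorSet w G)
    (hH : IsCACGeneratorSet w H)
    (hGH : ∀ g ∈ G, ∀ h ∈ H, ∀ j j' : ℤ, j ≠ 0 → j.natAbs < w → j'.natAbs < w → j • g ≠ j' • h) :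
    IsCACGeneratorSet w (G ∪ H) := by
  constructor
  · rintro x (hx | hx)
    exacts [hG.zsmul_ne_zero x hx, hH.zsmul_ne_zero x hx]
  · rintro x (hx | hx) y (hy | hy) j j' hj hjw hjw' h
    · exact hG.eq_of_zsmul_eq x hx y hy j j' hj hjw hjw' h
    · exact absurd h (hGH x hx y hy j j' hj hjw hjw')
    · have hj' : j' ≠ 0 := by
        rintro rfl
        exact hH.zsmul_ne_zero x hx j hj hjw (by rw [h, zero_zsmul])
      exact absurd h.symm (hGH y hy x hx j' j hj' hjw' hjw)
    · exact hH.eq_of_zsmul_eq x hx y hy j j' hj hjw hjw' h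

theorem eq_zero_of_zsmul_eq_zero_of_coprime_factorial {n : ℕ} (hA : (Nat.card A).Coprime n !)
    {j : ℤ} (hj : j ≠ 0) (hjn : j.natAbs ≤ n) {x : A} (h : j • x = 0) : x = 0 := by
  have hdvd : j.natAbs ∣ n ! := Nat.dvd_factorial (Int.natAbs_pos.mpr hj) (by lia)
  refine (hA.coprime_dvd_right hdvd).nsmul_right_bijective.injective ?_
  simpa only [nsmul_zero, natAbs_nsmul_eq_zero] using h

theorem IsCACGeneratorSet.preimage {π : B →+ C} {H : Set C}
    (hker : (Nat.card π.ker).Coprime (w - 1)!) (hC : (Nat.card C).Coprime (2 * w - 2)!)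
    (hH : IsCACGeneratorSet w H) : IsCACGeneratorSet w (π ⁻¹' H) := by
  have map_zsmul_ne_zero : ∀ x ∈ π ⁻¹' H, ∀ j : ℤ, j ≠ 0 → j.natAbs < w → j • π x ≠ 0 :=
    fun x hx => hH.zsmul_ne_zero (π x) hx
  constructor
  · intro x hx j hj hjw h
    exact map_zsmul_ne_zero x hx j hj hjw (by rw [← map_zsmul, h, map_zero])
  · intro x hx y hy j j' hj hjw hjw' h
    have hπ : j • π x = j' • π y := by rw [← map_zsmul, h, map_zsmul]
    have hxy : π x = π y := hH.eq_of_zsmul_eq _ hx _ hy j j' hj hjw hjw' hπ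
    obtain rfl : j = j' := by
      by_contra hjj
      have hsub : (j - j') • π x = 0 := by rw [sub_zsmul, hπ, hxy, add_neg_cancel]
      have hx0 : π x = 0 :=
        eq_zero_of_zsmul_eq_zero_of_coprime_factorial hC (sub_ne_zero.mpr hjj) (by lia) hsub
      exact map_zsmul_ne_zero x hx j hj hjw (by rw [hx0, zsmul_zero])
    let d : π.ker := ⟨x - y, by rw [AddMonoidHom.mem_ker, map_sub, hxy, sub_self]⟩
    have hd : j • d = 0 := Subtype.ext (by simp [d, zsmul_sub, h])
    have hd0 : d = 0 := eq_zero_of_zsmul_eq_zero_of_coprime_factorial hker hj (by lia) hd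
    exact sub_eq_zero.mp (congrArg Subtype.val hd0)

theorem IsCACGeneratorSet.preimage_union {π : B →+ C} {H : Set C} {G : Set B}
    (hker : (Nat.card π.ker).Coprime (w - 1)!) (hC : (Nat.card C).Coprime (2 * w - 2)!)
    (hH : IsCACGeneratorSet w H) (hG : IsCACGeneratorSet w G) (hGker : G ⊆ π.ker) :
    IsCACGeneratorSet w (π ⁻¹' H ∪ G) := by
  refine (hH.preimage hker hC).union hG fun x hx g hg j j' hj hjw _ h => ?_
  have hπg : π (j' • g) = 0 := π.ker.zsmul_mem (hGker hg) j'
  exact hH.zsmul_ne_zero (π x) hx j hj hjw (by rw [← map_zsmul, h, hπg])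

theorem IsCACGeneratorSet.disjoint_preimage_ker (hw : 2 ≤ w) (π : B →+ C) {H : Set C}
    (hH : IsCACGeneratorSet w H) : Disjoint (π ⁻¹' H) π.ker := by
  rw [Set.disjoint_left]
  intro x hx hxker
  refine hH.zsmul_ne_zero (π x) hx 1 one_ne_zero (by lia) ?_
  rw [one_zsmul, AddMonoidHom.mem_ker.mp hxker]

theorem ncard_preimage_of_surjective {π : B →+ C} (hπ : Function.Surjective π) [Finite π.ker]
    (H : Finset C) : (π ⁻¹' H).ncard = H.card * Nat.card π.ker := by
  have finite_fiber (c : C) : Finite {b // π b = c} :=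
    .of_equiv _ (AddMonoidHom.fiberEquivKerOfSurjective hπ c).symm
  have card_fiber (c : C) : Nat.card {b // π b = c} = Nat.card π.ker :=
    Nat.card_congr (AddMonoidHom.fiberEquivKerOfSurjective hπ c)
  rw [← Nat.card_coe_set_eq, Finset.card_preimage_eq_sum_card_image_eq fun c _ => finite_fiber c,
    Finset.sum_congr rfl fun c _ => card_fiber c, Finset.sum_const, smul_eq_mul]

theorem exists_isCACGeneratorSet_of_surjective [Finite B] {π : B →+ C} (hw : 2 ≤ w)
    (hπ : Function.Surjective π) (hker : (Nat.card π.ker).Coprime (w - 1)!)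
    (hC : (Nat.card C).Coprime (2 * w - 2)!) {H : Finset C} {G : Finset π.ker}
    (hH : IsCACGeneratorSet w (H : Set C)) (hG : IsCACGeneratorSet w (G : Set π.ker)) :
    ∃ K : Finset B, IsCACGeneratorSet w (K : Set B) ∧
      K.card = H.card * Nat.card π.ker + G.card := by
  let G' : Set B := π.ker.subtype '' G
  have hG' : IsCACGeneratorSet w G' := hG.image π.ker.subtype_injective
  have hG'ker : G' ⊆ π.ker := by
    rintro _ ⟨g, -, rfl⟩
    exact g.2
  have hdisj : Disjoint (π ⁻¹' H) G' := (hH.disjoint_preimage_ker hw π).mono_right hG'ker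
  refine ⟨(π ⁻¹' H ∪ G').toFinite.toFinset, ?_, ?_⟩
  · rw [Set.Finite.coe_toFinset]
    exact hH.preimage_union hker hC hG' hG'ker
  · rw [← Set.ncard_eq_toFinset_card, Set.ncard_union_eq hdisj, ncard_preimage_of_surjective hπ,
      Set.ncard_image_of_injective _ π.ker.subtype_injective, Set.ncard_coe_finset]

end GeneratorSets

section Codewords

variable {L w : ℕ}

/-- The equi-difference codeword `{0, g, 2g, …, (w-1)g}` of weight `w` with generator `g`. -/
def equiDiffCodeword (w : ℕ) (g : ZMod L) : Finset (ZMod L) :=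
  (Finset.range w).image fun j : ℕ => (j : ZMod L) * g

theorem card_equiDiffCodeword_eq_iff {g : ZMod L} :
    (equiDiffCodeword w g).card = w ↔ ∀ j : ℤ, j ≠ 0 → j.natAbs < w → j • g ≠ 0 := by
  have hinj : (equiDiffCodeword w g).card = w ↔
      Set.InjOn (fun j : ℕ => (j : ZMod L) * g) (Finset.range w) := by
    rw [← Finset.card_image_iff, Finset.card_range, equiDiffCodeword]
  simp only [hinj, Set.InjOn, Finset.coe_range, Set.mem_Iio, ← nsmul_eq_mul]
  constructor
  · intro h j hj hjw hjg
    have habs : j.natAbs • g = 0 • g := by rwa [zero_nsmul, natAbs_nsmul_eq_zero]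
    exact hj (Int.natAbs_eq_zero.mp (h hjw (by lia) habs))
  · intro h a ha b hb hab
    by_contra hne
    refine h (a - b) (by lia) (by lia) ?_
    rw [sub_zsmul, natCast_zsmul, natCast_zsmul, hab, add_neg_cancel]

theorem mem_dstar_equiDiffCodeword {g x : ZMod L} :
    x ∈ dstar (equiDiffCodeword w g) ↔ x ≠ 0 ∧ ∃ j : ℤ, j.natAbs < w ∧ j • g = x := by
  simp only [dstar, equiDiffCodeword, Finset.mem_erase, Finset.mem_image, Finset.mem_product,
    Finset.mem_range, Prod.exists, ← nsmul_eq_mul]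
  refine and_congr_right fun _ => ⟨?_, ?_⟩
  · rintro ⟨_, _, ⟨⟨a, ha, rfl⟩, b, hb, rfl⟩, rfl⟩
    exact ⟨a - b, by lia, by rw [sub_zsmul, natCast_zsmul, natCast_zsmul, sub_eq_add_neg]⟩
  · rintro ⟨j, hj, rfl⟩
    refine ⟨_, _, ⟨⟨j.toNat, by lia, rfl⟩, (-j).toNat, by lia, rfl⟩, ?_⟩
    rw [← natCast_zsmul, ← natCast_zsmul, sub_eq_add_neg, ← sub_zsmul, Int.toNat_sub_toNat_neg]

theorem disjoint_dstar_equiDiffCodeword_iff {g g' : ZMod L}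
    (hg : ∀ j : ℤ, j ≠ 0 → j.natAbs < w → j • g ≠ 0) :
    Disjoint (dstar (equiDiffCodeword w g)) (dstar (equiDiffCodeword w g')) ↔
      ∀ j j' : ℤ, j ≠ 0 → j.natAbs < w → j'.natAbs < w → j • g ≠ j' • g' := by
  simp only [Finset.disjoint_left, mem_dstar_equiDiffCodeword]
  constructor
  · intro h j j' hj hjw hjw' heq
    exact h ⟨hg j hj hjw, j, hjw, rfl⟩ ⟨hg j hj hjw, j', hjw', heq.symm⟩
  · rintro h _ ⟨hx, j, hjw, rfl⟩ ⟨-, j', hjw', heq⟩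
    refine h j j' ?_ hjw hjw' heq.symm
    rintro rfl
    exact hx (zero_zsmul g)

theorem isCAC_image_equiDiffCodeword_iff {G : Finset (ZMod L)}
    (hinj : Set.InjOn (equiDiffCodeword w) (G : Set (ZMod L))) :
    IsCAC L w (G.image (equiDiffCodeword w)) ↔ IsCACGeneratorSet w (G : Set (ZMod L)) := by
  simp only [IsCAC, Finset.forall_mem_image, card_equiDiffCodeword_eq_iff]
  constructor
  · rintro ⟨hne, hdisj⟩
    refine ⟨fun g hg => hne hg, fun g hg g' hg' j j' hj hjw hjw' h => ?_⟩
    by_contra hgg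
    exact (disjoint_dstar_equiDiffCodeword_iff (hne hg)).mp
      (hdisj hg hg' (hinj.ne hg hg' hgg)) j j' hj hjw hjw' h
  · rintro ⟨hne, heq⟩
    refine ⟨fun g hg => hne g hg, fun g hg g' hg' hgg => ?_⟩
    refine (disjoint_dstar_equiDiffCodeword_iff (hne g hg)).mpr fun j j' hj hjw hjw' h => hgg ?_
    rw [heq g hg g' hg' j j' hj hjw hjw' h]

theorem IsCACGeneratorSet.injOn_equiDiffCodeword (hw : 2 ≤ w) {G : Set (ZMod L)}
    (hG : IsCACGeneratorSet w G) : Set.InjOn (equiDiffCodeword w) G := by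
  intro g hg g' hg' h
  have h1w : (1 : ℤ).natAbs < w := by lia
  have hmem : g ∈ dstar (equiDiffCodeword w g) := mem_dstar_equiDiffCodeword.mpr
    ⟨by simpa using hG.zsmul_ne_zero g hg 1 one_ne_zero h1w, 1, h1w, one_zsmul g⟩
  rw [h] at hmem
  obtain ⟨-, j, hjw, hj⟩ := mem_dstar_equiDiffCodeword.mp hmem
  exact hG.eq_of_zsmul_eq g hg g' hg' 1 j one_ne_zero h1w hjw (by rw [one_zsmul, hj])

end Codewords

/-- There is an equi-difference conflict-avoiding code of length `L` and weight `w` with exactly `m`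
codewords. -/
def ExistsEquiDiffCAC (L w m : ℕ) : Prop :=
  ∃ C : Finset (Finset (ZMod L)), IsCAC L w C ∧ (∀ S ∈ C, IsEquiDiff w S) ∧ C.card = m

theorem existsEquiDiffCAC_iff {L w m : ℕ} (hw : 2 ≤ w) :
    ExistsEquiDiffCAC L w m ↔
      ∃ G : Finset (ZMod L), IsCACGeneratorSet w (G : Set (ZMod L)) ∧ G.card = m := by
  constructor
  · rintro ⟨C, hC, hE, rfl⟩
    obtain ⟨G, -, hinj, rfl⟩ := Finset.exists_subset_injOn_image_eq_of_surjOn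
      (f := equiDiffCodeword w) Set.univ C fun S hS => by
        obtain ⟨g, rfl⟩ := hE S hS
        exact ⟨g, trivial, rfl⟩
    exact ⟨G, (isCAC_image_equiDiffCodeword_iff hinj).mp hC,
      (Finset.card_image_of_injOn hinj).symm⟩
  · rintro ⟨G, hG, rfl⟩
    have hinj := hG.injOn_equiDiffCodeword hw
    exact ⟨G.image (equiDiffCodeword w), (isCAC_image_equiDiffCodeword_iff hinj).mpr hG,
      Finset.forall_mem_image.mpr fun g _ => ⟨g, rfl⟩, Finset.card_image_of_injOn hinj⟩

theorem existsEquiDiffCAC_zero (L w : ℕ) : ExistsEquiDiffCAC L w 0 :=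
  ⟨∅, by simp [IsCAC], by simp, rfl⟩

theorem card_ker_castHom_mul (M L : ℕ) [NeZero M] :
    Nat.card (ZMod.castHom (dvd_mul_right M L) (ZMod M)).toAddMonoidHom.ker = L := by
  set π := (ZMod.castHom (dvd_mul_right M L) (ZMod M)).toAddMonoidHom
  have hindex : π.ker.index = M := by
    have hrange : π.range = ⊤ :=
      AddMonoidHom.range_eq_top.mpr (ZMod.castHom_surjective (dvd_mul_right M L))
    rw [AddSubgroup.index_ker, hrange, AddSubgroup.card_top, Nat.card_zmod]
  have hmul := π.ker.card_mul_index
  rw [hindex, Nat.card_zmod, mul_comm] at hmul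
  exact mul_left_cancel₀ (NeZero.ne M) hmul

theorem ne_zero_of_coprime_factorial {k n : ℕ} (hn : 2 ≤ n) (h : k.Coprime n !) : k ≠ 0 := by
  rintro rfl
  rw [Nat.coprime_zero_left, Nat.factorial_eq_one] at h
  lia

theorem ExistsEquiDiffCAC.mul {M L w a b : ℕ} (hw : 2 ≤ w)
    (hM : M.Coprime (2 * w - 2)!) (hL : L.Coprime (w - 1)!)
    (ha : ExistsEquiDiffCAC M w a) (hb : ExistsEquiDiffCAC L w b) :
    ExistsEquiDiffCAC (M * L) w (a * L + b) := by
  obtain rfl | hL0 := eq_or_ne L 0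
  · simpa only [mul_zero, zero_add] using hb
  have : NeZero M := ⟨ne_zero_of_coprime_factorial (by lia) hM⟩
  have : NeZero L := ⟨hL0⟩
  rw [existsEquiDiffCAC_iff hw] at ha hb ⊢
  obtain ⟨H, hH, rfl⟩ := ha
  obtain ⟨G, hG, rfl⟩ := hb
  let π := (ZMod.castHom (dvd_mul_right M L) (ZMod M)).toAddMonoidHom
  have hker : Nat.card π.ker = L := card_ker_castHom_mul M L
  let e : ZMod L ≃+ π.ker := addEquivOfAddCyclicCardEq (by rw [hker, Nat.card_zmod])
  have heG : IsCACGeneratorSet w (G.map e.toEquiv.toEmbedding : Set π.ker) := by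
    rw [Finset.coe_map]
    exact hG.image (f := e.toAddMonoidHom) e.injective
  obtain ⟨K, hK, hcard⟩ := exists_isCACGeneratorSet_of_surjective (π := π) hw
    (ZMod.castHom_surjective (dvd_mul_right M L)) (by rwa [hker]) (by rwa [Nat.card_zmod]) hH heG
  exact ⟨K, hK, by rw [hcard, hker, Finset.card_map]⟩

theorem ExistsEquiDiffCAC.pow {M w a : ℕ} (hw : 2 ≤ w) (hM : M.Coprime (2 * w - 2)!)
    (ha : ExistsEquiDiffCAC M w a) (r : ℕ) :
    ExistsEquiDiffCAC (M ^ r) w (a * ∑ k ∈ Finset.range r, M ^ k) := by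
  induction r with
  | zero => exact existsEquiDiffCAC_zero _ w
  | succ r ih =>
    have hpow : (M ^ r).Coprime (w - 1)! :=
      (hM.coprime_dvd_right (Nat.factorial_dvd_factorial (by lia))).pow_left r
    rw [pow_succ', Finset.sum_range_succ_comm, mul_add]
    exact ha.mul hw hM hpow ih

theorem existsEquiDiffCAC_prod {w : ℕ} (hw : 2 ≤ w) {n : ℕ} (M a : Fin n → ℕ)
    (hM : ∀ i, (M i).Coprime (2 * w - 2)!) (ha : ∀ i, ExistsEquiDiffCAC (M i) w (a i)) :
    ExistsEquiDiffCAC (∏ i, M i) w (∑ i, a i * ∏ j ∈ Finset.Ioi i, M j) := by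
  induction n with
  | zero => exact existsEquiDiffCAC_zero _ w
  | succ n ih =>
    have htail : (∏ i : Fin n, M i.succ).Coprime (w - 1)! := Nat.Coprime.prod_left fun i _ =>
      (hM i.succ).coprime_dvd_right (Nat.factorial_dvd_factorial (by lia))
    rw [Fin.prod_univ_succ, Fin.sum_univ_succ]
    simp only [Fin.Ioi_zero_eq_map, Fin.Ioi_succ, Finset.prod_map, Fin.coe_succEmb]
    exact (ha 0).mul hw (hM 0) htail
      (ih (fun i => M i.succ) (fun i => a i.succ) (fun i => hM i.succ) fun i => ha i.succ)

theorem stmt_5_general (w n : ℕ) (hw : 2 ≤ w) (p : Fin n → ℕ)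
    (hpw : ∀ i, 2 * w - 1 ≤ (p i).minFac) (m : Fin n → ℕ)
    (hCAC : ∀ i, ∃ C : Finset (Finset (ZMod (p i))),
      IsCAC (p i) w C ∧ (∀ S ∈ C, IsEquiDiff w S) ∧ C.card = m i)
    (r : Fin n → ℕ) :
    ∃ C : Finset (Finset (ZMod (∏ i, p i ^ r i))),
      IsCAC (∏ i, p i ^ r i) w C ∧ (∀ S ∈ C, IsEquiDiff w S) ∧
      C.card = ∑ i, m i * ((p i ^ r i - 1) / (p i - 1)) * ∏ j ∈ Finset.Ioi i, p j ^ r j := by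
  have hne_one (i) : p i ≠ 1 := by
    intro h
    have hmin := hpw i
    rw [h, Nat.minFac_one] at hmin
    lia
  have hcop (i) : (p i).Coprime (2 * w - 2)! :=
    (Nat.coprime_factorial_iff (hne_one i)).mpr ((by lia : 2 * w - 2 < 2 * w - 1).trans_le (hpw i))
  have htwo (i) : 2 ≤ p i :=
    (Nat.two_le_iff _).mpr ⟨ne_zero_of_coprime_factorial (by lia) (hcop i), hne_one i⟩
  simp only [← Nat.geomSum_eq (htwo _)]
  exact existsEquiDiffCAC_prod hw (fun i => p i ^ r i) _ (fun i => (hcop i).pow_left (r i))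
    fun i => ExistsEquiDiffCAC.pow hw (hcop i) (hCAC i) (r i)

theorem stmt_5 (w n : ℕ) (hw : 2 ≤ w) (p : Fin n → ℕ) (hp : ∀ i, (p i).Prime)
    (hmono : StrictMono p) (hpw : ∀ i, 2 * w - 1 ≤ p i) (m : Fin n → ℕ)
    (hCAC : ∀ i, ∃ C : Finset (Finset (ZMod (p i))),
      IsCAC (p i) w C ∧ (∀ S ∈ C, IsEquiDiff w S) ∧ C.card = m i)
    (r : Fin n → ℕ) (hr : ∀ i, 0 < r i) :
    ∃ C : Finset (Finset (ZMod (∏ i, p i ^ r i))),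
      IsCAC (∏ i, p i ^ r i) w C ∧ (∀ S ∈ C, IsEquiDiff w S) ∧
      C.card = ∑ i, m i * ((p i ^ r i - 1) / (p i - 1)) * ∏ j ∈ Finset.Ioi i, p j ^ r j :=
  stmt_5_general w n hw p (fun i => (hp i).minFac_eq.symm ▸ hpw i) m hCAC r
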